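/- Let D be a domain in ℂ^n, let P and P̃ be polydiscs with P ⊂ D ∩ P̃, P nonempty. Assume that for every z ∈ P and every complex (affine) line L passing through z, the set (L ∩ P̃) \ D is a polar subset of L (identified with ℂ). Then D ∩ P̃ is connected. -/

import Mathlib

/-! Every point of `D ∩ P̃` lies on a complex line through the centre of `P`, and such a line meets
`P̃` in a planar star-shaped domain from which `D` removes a relatively closed polar set. It thus
suffices that a relatively closed polar set does not disconnect a planar domain.

Suppose it separates open sets `A` and `B` with a common boundary point `z`, and let `u` be
subharmonic near `z` and `-∞` on the polar set, hence on `∂A` near `z`. Take `b ∈ B` close to `z`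
and a disc of radius `R` about `b` containing `z`. Since `(w - b)⁻¹` is holomorphic and injective,
`|w - b|⁻²` is strictly subharmonic on `A`, and the maximum principle on the part of `A` in the
disc gives `u(w) ≤ M + k (R⁻² - |w - b|⁻²)` there for every `k > 0`, where `M` bounds `u` on the
circle. Letting `k → ∞` shows that `u = -∞` on an open set, and the same estimate propagates this
to the whole connected neighbourhood, a contradiction. -/

open MeasureTheory Filter Topology Metric Set
open scoped ENNReal NNReal

/-- Truncated circle average of an `EReal`-valued function: the average over the circle of
center `c` and radius `R` of the function truncated below at `-n`. -/
noncomputable def circleAvgTrunc (u : ℂ → EReal) (c : ℂ) (R : ℝ) (n : ℕ) : ℝ :=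
  (2 * Real.pi)⁻¹ * ∫ θ in (0:ℝ)..(2 * Real.pi),
    (max (u (c + R * Complex.exp (θ * Complex.I))) (-(n : ℝ) : EReal)).toReal

/-- `u` is subharmonic on `Ω ⊆ ℂ`: values in `[-∞, ∞)`, upper semicontinuous on `Ω`, and for
every closed disc contained in `Ω` the value at the center is at most the mean over the
boundary circle (in the extended sense, via decreasing truncations). -/
def SubharmonicOn (u : ℂ → EReal) (Ω : Set ℂ) : Prop :=
  UpperSemicontinuousOn u Ω ∧ (∀ z ∈ Ω, u z < ⊤) ∧
    ∀ c ∈ Ω, ∀ R : ℝ, 0 < R → Metric.closedBall c R ⊆ Ω →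
      u c ≤ ⨅ n : ℕ, (circleAvgTrunc u c R n : EReal)

/-- `u` is plurisubharmonic on `Ω`: values in `[-∞, ∞)`, upper semicontinuous on `Ω`, and its
restriction to every complex line is subharmonic. -/
def PlurisubharmonicOn {E : Type*} [NormedAddCommGroup E] [NormedSpace ℂ E]
    (u : E → EReal) (Ω : Set E) : Prop :=
  UpperSemicontinuousOn u Ω ∧ (∀ z ∈ Ω, u z < ⊤) ∧
    ∀ a b : E, SubharmonicOn (fun lam : ℂ => u (a + lam • b)) {lam : ℂ | a + lam • b ∈ Ω}

/-- A set `P ⊆ ℂ` is polar. -/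
def PolarSet (P : Set ℂ) : Prop :=
  ∀ z ∈ P, ∃ U : Set ℂ, IsOpen U ∧ IsConnected U ∧ z ∈ U ∧
    ∃ u : ℂ → EReal, SubharmonicOn u U ∧ (∃ x ∈ U, u x ≠ ⊥) ∧ ∀ x ∈ P ∩ U, u x = ⊥

/-- A set `P ⊆ ℂⁿ` is pluripolar. -/
def PluripolarSet {E : Type*} [NormedAddCommGroup E] [NormedSpace ℂ E] (P : Set E) : Prop :=
  ∀ z ∈ P, ∃ U : Set E, IsOpen U ∧ IsConnected U ∧ z ∈ U ∧
    ∃ u : E → EReal, PlurisubharmonicOn u U ∧ (∃ x ∈ U, u x ≠ ⊥) ∧ ∀ x ∈ P ∩ U, u x = ⊥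

/-- A domain `D` is pseudoconvex if `z ↦ -log dist(z, ∂D)` is plurisubharmonic on `D`. -/
def IsPseudoconvex {E : Type*} [NormedAddCommGroup E] [NormedSpace ℂ E] (D : Set E) : Prop :=
  PlurisubharmonicOn (fun z => ((- Real.log (Metric.infDist z Dᶜ) : ℝ) : EReal)) D

/-- The square-integrable holomorphic functions on an open set `Ω`. -/
def L2h {E : Type*} [NormedAddCommGroup E] [NormedSpace ℂ E] [MeasureSpace E]
    (Ω : Set E) : Set (E → ℂ) :=
  {f | DifferentiableOn ℂ f Ω ∧ (∫⁻ z in Ω, (‖f z‖₊ : ℝ≥0∞) ^ 2) < ⊤}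

/-- The Bergman kernel of `Ω` on the diagonal,
`K_Ω(z) = sup { |f(z)|²/‖f‖²_{L²(Ω)} : f ∈ L²ₕ(Ω), f ≢ 0 }`. -/
noncomputable def bergmanKernel {E : Type*} [NormedAddCommGroup E] [NormedSpace ℂ E]
    [MeasureSpace E] (Ω : Set E) (z : E) : ℝ≥0∞ :=
  ⨆ (f : E → ℂ) (_ : f ∈ L2h Ω) (_ : ∃ w ∈ Ω, f w ≠ 0),
    (‖f z‖₊ : ℝ≥0∞) ^ 2 / ∫⁻ w in Ω, (‖f w‖₊ : ℝ≥0∞) ^ 2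

/-- `D` is an `L²ₕ`-domain of holomorphy: there are no domains `D₀, D₁` with
`∅ ≠ D₀ ⊆ D₁ ∩ D`, `D₁ ⊄ D`, such that every `f ∈ L²ₕ(D)` extends holomorphically to `D₁`
(agreeing with `f` on `D₀`). -/
def IsL2hDomainOfHolomorphy {E : Type*} [NormedAddCommGroup E] [NormedSpace ℂ E]
    [MeasureSpace E] (D : Set E) : Prop :=
  ¬ ∃ D0 D1 : Set E, IsOpen D0 ∧ IsConnected D0 ∧ IsOpen D1 ∧ IsConnected D1 ∧
      D0 ⊆ D1 ∩ D ∧ ¬ (D1 ⊆ D) ∧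
      ∀ f ∈ L2h D, ∃ F : E → ℂ, DifferentiableOn ℂ F D1 ∧ Set.EqOn F f D0

/-- `w` is a regular boundary point of the domain `D ⊆ ℂ`. -/
def RegularBoundaryPt (D : Set ℂ) (w : ℂ) : Prop :=
  ∃ U : Set ℂ, IsOpen U ∧ w ∈ U ∧ ∃ u : ℂ → EReal, SubharmonicOn u (U ∩ D) ∧
    (∀ z ∈ U ∩ D, u z < 0) ∧ Tendsto u (𝓝[U ∩ D] w) (𝓝 (0 : EReal))

/-- The (pluricomplex) Green function of a domain `D ⊆ ℂ` with logarithmic pole at `p`. -/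
noncomputable def greenFn (D : Set ℂ) (p z : ℂ) : EReal :=
  sSup {v : EReal | ∃ u : ℂ → EReal, SubharmonicOn u D ∧ (∀ x ∈ D, u x < 0) ∧
    (∃ C : ℝ, ∀ᶠ x in 𝓝 p, u x ≤ ((Real.log ‖x - p‖ + C : ℝ) : EReal)) ∧ v = u z}

/-- A polydisc in `ℂⁿ` with centre `c` and multiradius `r`. -/
def polydisc {n : ℕ} (c : Fin n → ℂ) (r : Fin n → ℝ) : Set (Fin n → ℂ) :=
  {z | ∀ i, ‖z i - c i‖ < r i}

theorem exists_real_forall_le_of_isCompact {X : Type*} [TopologicalSpace X] {u : X → EReal}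
    {K : Set X} (hK : IsCompact K) (hu : UpperSemicontinuousOn u K) (htop : ∀ x ∈ K, u x < ⊤) :
    ∃ M : ℝ, ∀ x ∈ K, u x ≤ M := by
  rcases K.eq_empty_or_nonempty with rfl | hne
  · exact ⟨0, fun x hx => hx.elim⟩
  · obtain ⟨q, hq, hmax⟩ := hu.exists_isMaxOn hne hK
    obtain ⟨M, hqM, -⟩ := EReal.lt_iff_exists_real_btwn.1 (htop q hq)
    exact ⟨M, fun x hx => (hmax hx).trans hqM.le⟩

section CircleAverage

open Real

theorem circleAverage_pos {g : ℂ → ℝ} {c : ℂ} {R : ℝ} (hg : ContinuousOn g (sphere c |R|))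
    (hpos : ∀ z ∈ sphere c |R|, 0 < g z) : 0 < circleAverage g c R :=
  mul_pos (inv_pos.2 two_pi_pos) <|
    intervalIntegral.intervalIntegral_pos_of_pos hg.circleIntegrable'
      (fun θ => hpos _ (circleMap_mem_sphere' c R θ)) two_pi_pos

theorem sq_norm_circleAverage_lt_circleAverage_sq_norm {F : Type*} [NormedAddCommGroup F]
    [InnerProductSpace ℝ F] [CompleteSpace F] {f : ℂ → F} {c : ℂ} {R : ℝ}
    (hf : ContinuousOn f (sphere c |R|)) (hne : ∀ z ∈ sphere c |R|, f z ≠ circleAverage f c R) :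
    ‖circleAverage f c R‖ ^ 2 < circleAverage (fun z => ‖f z‖ ^ 2) c R := by
  set m := circleAverage f c R
  have hsq : ContinuousOn (fun z => ‖f z‖ ^ 2) (sphere c |R|) := by fun_prop
  have hinner : ContinuousOn (fun z => inner ℝ m (f z)) (sphere c |R|) := by fun_prop
  have havg : circleAverage (fun z => inner ℝ m (f z)) c R = ‖m‖ ^ 2 :=
    ((innerSL ℝ m).circleAverage_comp_comm hf.circleIntegrable').trans
      (real_inner_self_eq_norm_sq m)
  have hexpand : (fun z => ‖f z - m‖ ^ 2) =
      (fun z => ‖f z‖ ^ 2) - (2 : ℝ) • (fun z => inner ℝ m (f z)) + fun _ => ‖m‖ ^ 2 := by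
    funext z
    simp only [Pi.add_apply, Pi.sub_apply, Pi.smul_apply, smul_eq_mul, norm_sub_sq_real,
      real_inner_comm]
  have hvariance : circleAverage (fun z => ‖f z - m‖ ^ 2) c R =
      circleAverage (fun z => ‖f z‖ ^ 2) c R - ‖m‖ ^ 2 := by
    rw [hexpand, circleAverage_add (hsq.sub (hinner.const_smul _)).circleIntegrable'
      continuousOn_const.circleIntegrable', circleAverage_sub hsq.circleIntegrable'
      (hinner.const_smul _).circleIntegrable', circleAverage_smul, havg, circleAverage_const,
      smul_eq_mul]
    ring
  have hpos : 0 < circleAverage (fun z => ‖f z - m‖ ^ 2) c R :=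
    circleAverage_pos (by fun_prop) fun z hz =>
      pow_pos (norm_pos_iff.2 (sub_ne_zero.2 (hne z hz))) 2
  rwa [hvariance, sub_pos] at hpos

theorem circleIntegrable_toReal_max {u : ℂ → EReal} {c : ℂ} {R : ℝ}
    (hu : UpperSemicontinuousOn u (sphere c |R|)) (htop : ∀ z ∈ sphere c |R|, u z < ⊤) (a : ℝ) :
    CircleIntegrable (fun z => (max (u z) a).toReal) c R := by
  obtain ⟨M, hM⟩ := exists_real_forall_le_of_isCompact (isCompact_sphere c |R|) hu htop
  have hmem : ∀ θ, circleMap c R θ ∈ sphere c |R| := circleMap_mem_sphere' c R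
  have husc : UpperSemicontinuous fun θ => u (circleMap c R θ) :=
    upperSemicontinuousOn_univ_iff.1 <|
      hu.comp (continuous_circleMap c R).continuousOn fun θ _ => hmem θ
  have hmeas : Measurable fun θ => (max (u (circleMap c R θ)) a).toReal :=
    measurable_ereal_toReal.comp (husc.measurable.max measurable_const)
  have hbounds : ∀ θ, (max (u (circleMap c R θ)) a).toReal ∈ Icc a (max M a) := by
    intro θ
    have hle : max (u (circleMap c R θ)) a ≤ (max M a : ℝ) :=
      (max_le_max_right _ (hM _ (hmem θ))).trans_eq (EReal.coe_strictMono.monotone.map_max).symm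
    have hge : (a : EReal) ≤ max (u (circleMap c R θ)) a := le_max_right _ _
    exact ⟨EReal.toReal_le_toReal hge (EReal.coe_ne_bot _)
        (hle.trans_lt (EReal.coe_lt_top _)).ne,
      EReal.toReal_le_toReal hle ((EReal.bot_lt_coe a).trans_le hge).ne' (EReal.coe_ne_top _)⟩
  refine (intervalIntegrable_const (c := max |a| |max M a|)).mono_fun
    hmeas.aestronglyMeasurable (ae_of_all _ fun θ => ?_)
  exact (abs_le_max_abs_abs (hbounds θ).1 (hbounds θ).2).trans (le_abs_self _)

end CircleAverage

namespace SubharmonicOn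

open Real

variable {u : ℂ → EReal} {Ω : Set ℂ}

theorem le_circleAverage_of_le (hu : SubharmonicOn u Ω) {p : ℂ} {s : ℝ} (hs : 0 < s)
    (hsub : closedBall p s ⊆ Ω) {g : ℂ → ℝ} (hg : ContinuousOn g (sphere p s))
    (hle : ∀ z ∈ sphere p s, u z ≤ g z) : u p ≤ circleAverage g p s := by
  obtain ⟨K, hK⟩ := (isCompact_sphere p s).exists_bound_of_continuousOn hg
  obtain ⟨n, hn⟩ := exists_nat_ge K
  have hsphere : sphere p |s| ⊆ Ω := by
    rw [abs_of_pos hs]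
    exact sphere_subset_closedBall.trans hsub
  have htrunc_le : ∀ z ∈ sphere p |s|, (max (u z) (-n : ℝ)).toReal ≤ g z := by
    intro z hz
    rw [abs_of_pos hs] at hz
    have hlow : (-n : ℝ) ≤ g z := (neg_le_neg ((hK z hz).trans hn)).trans (neg_abs_le (g z))
    exact EReal.toReal_le_toReal (max_le (hle z hz) (EReal.coe_le_coe_iff.2 hlow))
      ((EReal.bot_lt_coe _).trans_le (le_max_right _ _)).ne' (EReal.coe_ne_top _)
  have hint : CircleIntegrable (fun z => (max (u z) (-n : ℝ)).toReal) p s :=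
    circleIntegrable_toReal_max (hu.1.mono hsphere) (fun z hz => hu.2.1 z (hsphere hz)) _
  calc u p ≤ ⨅ n : ℕ, (circleAvgTrunc u p s n : EReal) :=
        hu.2.2 p (hsub (mem_closedBall_self hs.le)) s hs hsub
    _ ≤ circleAvgTrunc u p s n := iInf_le _ n
    _ ≤ circleAverage g p s :=
        EReal.coe_le_coe_iff.2 (circleAverage_mono hint (hg.circleIntegrable hs.le) htrunc_le)

theorem eq_bot_of_add_isMaxOn (hu : SubharmonicOn u Ω) {p : ℂ} {s : ℝ} (hs : 0 < s)
    (hsub : closedBall p s ⊆ Ω) {φ : ℂ → ℝ} (hφ : ContinuousOn φ (sphere p s))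
    (hlt : φ p < circleAverage φ p s)
    (hmax : IsMaxOn (fun z => u z + φ z) (sphere p s) p) : u p = ⊥ := by
  by_contra hbot
  lift u p to ℝ using ⟨(hu.2.1 p (hsub (mem_closedBall_self hs.le))).ne, hbot⟩ with t ht
  have hle : ∀ z ∈ sphere p s, u z ≤ ((t + φ p - φ z : ℝ) : EReal) := by
    intro z hz
    rw [EReal.coe_sub, EReal.le_sub_iff_add_le (.inl (EReal.coe_ne_bot _))
      (.inl (EReal.coe_ne_top _)), EReal.coe_add, ht]
    exact hmax hz
  have hmean : t ≤ t + φ p - circleAverage φ p s := by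
    have := hu.le_circleAverage_of_le hs hsub (continuousOn_const.sub hφ) hle
    rwa [← ht, EReal.coe_le_coe_iff, circleAverage_sub continuousOn_const.circleIntegrable'
      (hφ.circleIntegrable hs.le), circleAverage_const] at this
  linarith

theorem add_le_of_forall_frontier_le (hu : SubharmonicOn u Ω) {W : Set ℂ} (hW : IsOpen W)
    (hWb : Bornology.IsBounded W) (hWΩ : closure W ⊆ Ω) {φ : ℂ → ℝ}
    (hφ : ContinuousOn φ (closure W))
    (hlt : ∀ p ∈ W, ∀ᶠ s in 𝓝[>] (0 : ℝ), φ p < circleAverage φ p s) {M : EReal}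
    (hM : ∀ z ∈ frontier W, u z + φ z ≤ M) {z : ℂ} (hz : z ∈ W) : u z + φ z ≤ M := by
  have husc : UpperSemicontinuousOn (fun z => u z + φ z) (closure W) :=
    (hu.1.mono hWΩ).add' (continuous_coe_real_ereal.comp_continuousOn hφ).upperSemicontinuousOn
      fun z _ => EReal.continuousAt_add (.inr (EReal.coe_ne_bot _)) (.inr (EReal.coe_ne_top _))
  obtain ⟨p, hp, hpmax⟩ := husc.exists_isMaxOn ⟨z, subset_closure hz⟩ hWb.isCompact_closure
  refine (hpmax (subset_closure hz)).trans ?_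
  by_cases hpW : p ∈ W
  · have hball : ∀ᶠ s in 𝓝[>] (0 : ℝ), closedBall p s ⊆ W :=
      (eventually_closedBall_subset (hW.mem_nhds hpW)).filter_mono nhdsWithin_le_nhds
    obtain ⟨s, hps, hsW, hs⟩ :=
      ((hlt p hpW).and (hball.and (eventually_mem_nhdsWithin (s := Ioi 0)))).exists
    have hsc : closedBall p s ⊆ closure W := hsW.trans subset_closure
    have hsphere : sphere p s ⊆ closure W := sphere_subset_closedBall.trans hsc
    have hbot : u p = ⊥ := hu.eq_bot_of_add_isMaxOn hs (hsc.trans hWΩ) (hφ.mono hsphere) hps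
      (hpmax.on_subset hsphere)
    simp only [hbot, EReal.bot_add, bot_le]
  · exact hM p (hW.frontier_eq ▸ ⟨hp, hpW⟩)

end SubharmonicOn

theorem sq_norm_inv_sub_lt_circleAverage {b p : ℂ} (hp : p ≠ b) :
    ∀ᶠ s in 𝓝[>] (0 : ℝ), ‖(p - b)⁻¹‖ ^ 2 < Real.circleAverage (fun z => ‖(z - b)⁻¹‖ ^ 2) p s := by
  have hball : ∀ᶠ s in 𝓝[>] (0 : ℝ), closedBall p s ⊆ {b}ᶜ :=
    (eventually_closedBall_subset (isOpen_compl_singleton.mem_nhds hp)).filter_mono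
      nhdsWithin_le_nhds
  filter_upwards [hball, self_mem_nhdsWithin] with s hsb hs
  rw [← abs_of_pos (show 0 < s from hs)] at hsb
  have hdiff : DifferentiableOn ℂ (fun z => (z - b)⁻¹) (closedBall p |s|) := fun z hz =>
    ((differentiableAt_id.sub_const b).inv (sub_ne_zero.2 (hsb hz))).differentiableWithinAt
  have hmean : Real.circleAverage (fun z => (z - b)⁻¹) p s = (p - b)⁻¹ :=
    (hdiff.mono closure_ball_subset_closedBall).diffContOnCl.circleAverage
  rw [← hmean]
  refine sq_norm_circleAverage_lt_circleAverage_sq_norm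
    (hdiff.continuousOn.mono sphere_subset_closedBall) fun z hz heq => ?_
  rw [hmean] at heq
  exact ne_of_mem_sphere hz (abs_pos.2 (show 0 < s from hs).ne').ne'
    (sub_left_injective (inv_injective heq))

namespace SubharmonicOn

variable {u : ℂ → EReal} {Ω : Set ℂ}

theorem add_mul_sq_norm_inv_sub_le (hu : SubharmonicOn u Ω) {A : Set ℂ} (hA : IsOpen A)
    {b : ℂ} (hb : b ∉ closure A) {R : ℝ} (hR : closedBall b R ⊆ Ω)
    (hfr : ∀ z ∈ frontier A ∩ closedBall b R, u z = ⊥) {M : EReal} (hM : ∀ z ∈ sphere b R, u z ≤ M)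
    {k : ℝ} (hk : 0 < k) {z : ℂ} (hz : z ∈ A ∩ ball b R) :
    u z + (k * ‖(z - b)⁻¹‖ ^ 2 : ℝ) ≤ M + (k * R⁻¹ ^ 2 : ℝ) := by
  have hRpos : 0 < R := dist_nonneg.trans_lt hz.2
  have hcl : closure (A ∩ ball b R) ⊆ closure A ∩ closedBall b R :=
    (closure_inter_subset_inter_closure _ _).trans
      (inter_subset_inter_right _ closure_ball_subset_closedBall)
  have hne_b : ∀ w ∈ closure (A ∩ ball b R), w ≠ b := fun w hw hwb => hb (hwb ▸ (hcl hw).1)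
  refine hu.add_le_of_forall_frontier_le (φ := fun w => k * ‖(w - b)⁻¹‖ ^ 2)
    (hA.inter isOpen_ball) (isBounded_ball.subset inter_subset_right)
    ((hcl.trans inter_subset_right).trans hR) ?continuous ?strict_submean ?frontier hz
  case continuous =>
    have hinv : ContinuousOn (fun w => (w - b)⁻¹) (closure (A ∩ ball b R)) :=
      (continuousOn_id.sub continuousOn_const).inv₀ fun w hw => sub_ne_zero.2 (hne_b w hw)
    exact continuousOn_const.mul (hinv.norm.pow 2)
  case strict_submean =>
    intro p hp
    filter_upwards [sq_norm_inv_sub_lt_circleAverage (hne_b p (subset_closure hp))] with s hs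
    simp only [← smul_eq_mul (a := k), Real.circleAverage_fun_smul]
    exact smul_lt_smul_of_pos_left hs hk
  case frontier =>
    intro w hw
    rcases frontier_inter_subset A (ball b R) hw with ⟨hwA, hwR⟩ | ⟨-, hwR⟩
    · rw [hfr w ⟨hwA, closure_ball_subset_closedBall hwR⟩, EReal.bot_add]
      exact bot_le
    · rw [frontier_ball b hRpos.ne'] at hwR
      rw [norm_inv, ← dist_eq_norm, mem_sphere.1 hwR]
      exact add_le_add_left (hM w hwR) _

theorem eq_bot_of_frontier_eq_bot (hu : SubharmonicOn u Ω) {A : Set ℂ} (hA : IsOpen A)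
    {b : ℂ} (hb : b ∉ closure A) {R : ℝ} (hR : closedBall b R ⊆ Ω)
    (hfr : ∀ z ∈ frontier A ∩ closedBall b R, u z = ⊥) {z : ℂ} (hz : z ∈ A ∩ ball b R) :
    u z = ⊥ := by
  obtain ⟨M, hM⟩ := exists_real_forall_le_of_isCompact (isCompact_closedBall b R)
    (hu.1.mono hR) fun w hw => hu.2.1 w (hR hw)
  by_contra hbot
  lift u z to ℝ using ⟨(hu.2.1 z (hR (ball_subset_closedBall hz.2))).ne, hbot⟩ with t ht
  have hgap : 0 < ‖(z - b)⁻¹‖ ^ 2 - R⁻¹ ^ 2 := by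
    have hzb : 0 < ‖z - b‖ :=
      norm_pos_iff.2 (sub_ne_zero.2 fun h => hb (h ▸ subset_closure hz.1))
    have hRpos : 0 < R := dist_nonneg.trans_lt hz.2
    rw [norm_inv, sub_pos]
    exact pow_lt_pow_left₀ (inv_strictAnti₀ hzb (mem_ball_iff_norm.1 hz.2))
      (inv_nonneg.2 hRpos.le) two_ne_zero
  have hk : 0 < (|M - t| + 1) / (‖(z - b)⁻¹‖ ^ 2 - R⁻¹ ^ 2) := by positivity
  have hlarge := hu.add_mul_sq_norm_inv_sub_le hA hb hR hfr
    (fun w hw => hM w (sphere_subset_closedBall hw)) hk hz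
  rw [← ht, ← EReal.coe_add, ← EReal.coe_add, EReal.coe_le_coe_iff] at hlarge
  have := div_mul_cancel₀ (|M - t| + 1) hgap.ne'
  linarith [le_abs_self (M - t)]

end SubharmonicOn

theorem exists_mem_ball_closedBall_subset {X : Type*} [PseudoMetricSpace X] {z : X} {V B : Set X}
    (hV : V ∈ 𝓝 z) (hz : z ∈ closure B) :
    ∃ b ∈ B, ∃ R, z ∈ ball b R ∧ closedBall b R ⊆ V := by
  obtain ⟨R, hR, hRV⟩ := nhds_basis_closedBall.mem_iff.1 hV
  obtain ⟨b, hb, hbz⟩ := mem_closure_iff.1 hz (R / 2) (half_pos hR)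
  refine ⟨b, hb, R / 2, hbz, (closedBall_subset_closedBall' ?_).trans hRV⟩
  linarith [dist_comm b z]

theorem SubharmonicOn.eqOn_bot_of_preconnected_of_eventually {u : ℂ → EReal} {U : Set ℂ}
    (hu : SubharmonicOn u U) (hU : IsOpen U) (hUc : IsPreconnected U) {x : ℂ} (hx : x ∈ U)
    (hbot : ∀ᶠ w in 𝓝 x, u w = ⊥) : ∀ z ∈ U, u z = ⊥ := by
  set I := interior {z | u z = ⊥}
  have hI : ∀ z ∈ I, u z = ⊥ := fun z hz => interior_subset (s := {z | u z = ⊥}) hz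
  suffices hsub : U ⊆ I from fun z hz => hI z (hsub hz)
  refine hUc.subset_of_closure_inter_subset isOpen_interior
    ⟨x, hx, mem_interior_iff_mem_nhds.2 hbot⟩ ?_
  rintro z ⟨hzI, hzU⟩
  obtain ⟨b, hb, R, hzR, hRU⟩ := exists_mem_ball_closedBall_subset (hU.mem_nhds hzU) hzI
  obtain ⟨ρ, hρ, hρI⟩ := nhds_basis_closedBall.mem_iff.1 (isOpen_interior.mem_nhds hb)
  have hb_out : b ∉ closure (closedBall b ρ)ᶜ := by
    rw [closure_compl, notMem_compl_iff]
    exact mem_interior_iff_mem_nhds.2 (closedBall_mem_nhds b hρ)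
  have hfr : ∀ w ∈ frontier (closedBall b ρ)ᶜ ∩ closedBall b R, u w = ⊥ := fun w hw =>
    hI w (hρI (isClosed_closedBall.frontier_subset (frontier_compl (closedBall b ρ) ▸ hw.1)))
  refine mem_interior.2 ⟨ball b R, fun w hwR => ?_, isOpen_ball, hzR⟩
  by_cases hw : w ∈ closedBall b ρ
  · exact hI w (hρI hw)
  · exact hu.eq_bot_of_frontier_eq_bot isClosed_closedBall.isOpen_compl hb_out hRU hfr ⟨hw, hwR⟩

namespace PolarSet

variable {E : Set ℂ}

theorem exists_subharmonicOn (hE : PolarSet E) {z : ℂ} (hz : z ∈ E) :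
    ∃ U ∈ 𝓝 z, ∃ u, SubharmonicOn u U ∧ (∀ w ∈ E ∩ U, u w = ⊥) ∧
      ∀ x ∈ U, ∃ᶠ w in 𝓝 x, u w ≠ ⊥ := by
  obtain ⟨U, hU, hUc, hzU, u, hu, ⟨y, hyU, hy⟩, hbot⟩ := hE z hz
  refine ⟨U, hU.mem_nhds hzU, u, hu, hbot, fun x hx hev => hy ?_⟩
  exact hu.eqOn_bot_of_preconnected_of_eventually hU hUc.isPreconnected hx
    (hev.mono fun w hw => not_not.1 hw) y hyU

theorem interior_eq_empty (hE : PolarSet E) : interior E = ∅ := by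
  refine eq_empty_of_forall_notMem fun z hz => ?_
  obtain ⟨U, hU, u, -, hbot, hfreq⟩ := hE.exists_subharmonicOn (interior_subset hz)
  refine hfreq z (mem_of_mem_nhds hU) ?_
  filter_upwards [hU, mem_interior_iff_mem_nhds.1 hz] with w hwU hwE
  exact not_not.2 (hbot w ⟨hwE, hwU⟩)

theorem notMem_closure_inter_closure (hE : PolarSet E) {A B : Set ℂ} (hA : IsOpen A)
    (hB : IsOpen B) (hAB : Disjoint A B) {z : ℂ} (hz : A ∪ B ∪ E ∈ 𝓝 z) :
    z ∉ closure A ∩ closure B := by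
  rintro ⟨hzA, hzB⟩
  have hzE : z ∈ E := by
    rcases mem_of_mem_nhds hz with (h | h) | h
    · exact ((hAB.closure_right hA).le_bot ⟨h, hzB⟩).elim
    · exact ((hAB.closure_left hB).le_bot ⟨hzA, h⟩).elim
    · exact h
  obtain ⟨U, hU, u, hu, hbot, hfreq⟩ := hE.exists_subharmonicOn hzE
  obtain ⟨b, hb, R, hzR, hRV⟩ := exists_mem_ball_closedBall_subset (inter_mem hU hz) hzB
  have hfr : ∀ w ∈ frontier A ∩ closedBall b R, u w = ⊥ := by
    rintro w ⟨hwA, hwR⟩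
    refine hbot w ⟨?_, (hRV hwR).1⟩
    rcases (hRV hwR).2 with (h | h) | h
    · exact ((disjoint_frontier_iff_isOpen.2 hA).le_bot ⟨hwA, h⟩).elim
    · exact ((hAB.frontier_left hB).le_bot ⟨hwA, h⟩).elim
    · exact h
  have hbA : b ∉ closure A := fun h => (hAB.closure_left hB).le_bot ⟨h, hb⟩
  have hRU : closedBall b R ⊆ U := hRV.trans inter_subset_left
  obtain ⟨a, haR, haA⟩ := _root_.mem_closure_iff.1 hzA _ isOpen_ball hzR
  refine hfreq a (hRU (ball_subset_closedBall haR)) ?_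
  filter_upwards [hA.mem_nhds haA, isOpen_ball.mem_nhds haR] with w hwA hwR
  exact not_not.2 (hu.eq_bot_of_frontier_eq_bot hA hbA hRU hfr ⟨hwA, hwR⟩)

end PolarSet

theorem isPreconnected_inter_of_polarSet_sdiff {G D : Set ℂ} (hG : IsOpen G)
    (hGc : IsPreconnected G) (hD : IsOpen D) (hpol : PolarSet (G \ D)) :
    IsPreconnected (G ∩ D) := by
  have hdense : G ⊆ closure (G ∩ D) := by
    have hsub : G \ closure (G ∩ D) ⊆ interior (G \ D) :=
      interior_maximal (fun w hw => ⟨hw.1, fun hwD => hw.2 (subset_closure ⟨hw.1, hwD⟩)⟩)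
        (hG.sdiff isClosed_closure)
    rwa [hpol.interior_eq_empty, subset_empty_iff, sdiff_eq_empty] at hsub
  intro A' B' hA' hB' hcover hA'ne hB'ne
  by_contra hdisj
  set A := G ∩ D ∩ A'
  set B := G ∩ D ∩ B'
  have hA : IsOpen A := (hG.inter hD).inter hA'
  have hB : IsOpen B := (hG.inter hD).inter hB'
  have hAB : Disjoint A B := disjoint_left.2 fun w hwA hwB => hdisj ⟨w, hwA.1, hwA.2, hwB.2⟩
  have hunion : A ∪ B = G ∩ D := by
    rw [← inter_union_distrib_left, inter_eq_left.2 hcover]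
  rw [← hunion, closure_union] at hdense
  have hAG : A ⊆ G ∩ closure A := fun w hw => ⟨hw.1.1, subset_closure hw⟩
  have hBG : B ⊆ G ∩ closure B := fun w hw => ⟨hw.1.1, subset_closure hw⟩
  obtain ⟨z, hzG, hz⟩ := isPreconnected_closed_iff.1 hGc _ _ isClosed_closure isClosed_closure
    hdense (hA'ne.mono hAG) (hB'ne.mono hBG)
  refine hpol.notMem_closure_inter_closure hA hB hAB ?_ hz
  rw [hunion, inter_union_sdiff]
  exact hG.mem_nhds hzG

theorem connected_of_lines_polar_general {E : Type*} [AddCommGroup E] [Module ℂ E] [Module ℝ E]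
    [IsScalarTower ℝ ℂ E] [TopologicalSpace E] [ContinuousAdd E] [ContinuousSMul ℂ E]
    {D Ω : Set E} (hD : IsOpen D) (hΩ : IsOpen Ω) {a : E} (hΩa : StarConvex ℝ a Ω)
    (ha : a ∈ D ∩ Ω)
    (hlines : ∀ b : E, b ≠ 0 → PolarSet {lam : ℂ | a + lam • b ∈ Ω ∧ a + lam • b ∉ D}) :
    IsConnected (D ∩ Ω) := by
  refine ⟨⟨a, ha⟩, isPreconnected_of_forall a fun w hw => ?_⟩
  rcases eq_or_ne w a with rfl | hwa
  · exact ⟨{w}, singleton_subset_iff.2 ha, rfl, rfl, isPreconnected_singleton⟩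
  let line : ℂ → E := fun lam => a + lam • (w - a)
  have hline : Continuous line := by fun_prop
  have hline_zero : line 0 = a := by simp only [line, zero_smul, add_zero]
  have hline_one : line 1 = w := by simp only [line, one_smul, add_sub_cancel]
  have hstar : StarConvex ℝ 0 (line ⁻¹' Ω) := by
    have hlin : StarConvex ℝ ((0 : ℂ) • (w - a)) ((fun v => a + v) ⁻¹' Ω) :=
      StarConvex.preimage_add_right (by rwa [zero_smul, add_zero])
    exact hlin.linear_preimage ((LinearMap.toSpanSingleton ℂ E (w - a)).restrictScalars ℝ)
  have hstar_conn : IsConnected (line ⁻¹' Ω) :=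
    (hstar.isPathConnected (by rw [mem_preimage, hline_zero]; exact ha.2)).isConnected
  have hslice : IsPreconnected (line ⁻¹' Ω ∩ line ⁻¹' D) :=
    isPreconnected_inter_of_polarSet_sdiff (hΩ.preimage hline) hstar_conn.isPreconnected
      (hD.preimage hline) (hlines (w - a) (sub_ne_zero.2 hwa))
  refine ⟨line '' (line ⁻¹' Ω ∩ line ⁻¹' D), ?_, ⟨0, ?_, hline_zero⟩, ⟨1, ?_, hline_one⟩,
    hslice.image line hline.continuousOn⟩
  · rintro _ ⟨lam, hlam, rfl⟩
    exact hlam.symm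
  · rw [← preimage_inter, mem_preimage, hline_zero]
    exact ha.symm
  · rw [← preimage_inter, mem_preimage, hline_one]
    exact hw.symm

section Polydisc

variable {n : ℕ} {c : Fin n → ℂ} {r : Fin n → ℝ}

theorem polydisc_eq_pi_ball : polydisc c r = univ.pi fun i => ball (c i) (r i) := by
  ext z
  simp only [polydisc, mem_ofPred_eq, mem_univ_pi, mem_ball, dist_eq_norm]

theorem isOpen_polydisc : IsOpen (polydisc c r) :=
  polydisc_eq_pi_ball ▸ isOpen_set_pi finite_univ fun _ _ => isOpen_ball

theorem convex_polydisc : Convex ℝ (polydisc c r) :=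
  polydisc_eq_pi_ball ▸ convex_pi fun _ _ => convex_ball _ _

theorem center_mem_polydisc (hr : ∀ i, 0 < r i) : c ∈ polydisc c r :=
  polydisc_eq_pi_ball ▸ fun i _ => mem_ball_self (hr i)

end Polydisc

/-- If `D ⊆ ℂⁿ` is a domain, `P, P̃` polydiscs with `P ⊆ D ∩ P̃`, `P ≠ ∅`, and for every
`z ∈ P` and every complex line `L ∋ z` the set `(L ∩ P̃) \ D` is polar (in the line
coordinate), then `D ∩ P̃` is connected. -/
theorem connected_of_lines_polar {n : ℕ} (D : Set (Fin n → ℂ))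
    (hopen : IsOpen D) (hconn : IsConnected D)
    (c c' : Fin n → ℂ) (r r' : Fin n → ℝ) (hr : ∀ i, 0 < r i) (hr' : ∀ i, 0 < r' i)
    (hP : polydisc c r ⊆ D ∩ polydisc c' r')
    (hlines : ∀ z ∈ polydisc c r, ∀ b : Fin n → ℂ, b ≠ 0 →
      PolarSet {lam : ℂ | z + lam • b ∈ polydisc c' r' ∧ z + lam • b ∉ D}) :
    IsConnected (D ∩ polydisc c' r') :=
  have hc : c ∈ polydisc c r := center_mem_polydisc hr
  connected_of_lines_polar_general hopen isOpen_polydisc (convex_polydisc (hP hc).2) (hP hc)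
    (hlines c hc)
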